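/- If ξ is a horizontal nonholonomic symmetry (a constant section of 𝔤^F) whose action additionally leaves the Lagrangian form invariant, 𝓛_{j¹ξ_Y}(L·η) = 0, then for any solution φ of the nonholonomic field equations the associated momentum is conserved: (j¹φ)*(d J^{n.h.}_ξ) = 0, where J^{n.h.}_ξ = j¹ξ_Y ⌟ Θ_L. -/

import Mathlib

open scoped BigOperators

/-- Coordinate indices of `J¹π`. -/
abbrev Idx (n m : ℕ) : Type := Fin (n + 1) ⊕ (Fin m ⊕ Fin m × Fin (n + 1))

abbrev Jet1 (n m : ℕ) : Type := Idx n m → ℝ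
abbrev Base (n : ℕ) : Type := Fin (n + 1) → ℝ

/-- Coordinates of the total space `Y`. -/
abbrev YC (n m : ℕ) : Type := (Fin (n + 1) ⊕ Fin m) → ℝ

/-- Projection `π_{1,0} : J¹π → Y` in coordinates. -/
def pr10 (n m : ℕ) (p : Jet1 n m) : YC n m :=
  fun i => p (Sum.elim Sum.inl (fun a => Sum.inr (Sum.inl a)) i)

/-- First jet prolongation `j¹φ` of a section `φ`, in coordinates. -/
noncomputable def jetProlong (n m : ℕ) (φ : Base n → Fin m → ℝ) (x : Base n) : Jet1 n m :=
  Sum.elim x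
    (Sum.elim (fun a => φ x a)
      (fun aμ : Fin m × Fin (n + 1) =>
        fderiv ℝ (fun x' => φ x' aμ.1) x (Pi.single aμ.2 1)))

/-- Total derivative `d/dx^ν` on functions of `(x,y)`, evaluated at a jet `p`. -/
noncomputable def totalDY (n m : ℕ) (ν : Fin (n + 1)) (g : YC n m → ℝ) (p : Jet1 n m) : ℝ :=
  fderiv ℝ g (pr10 n m p) (Pi.single (Sum.inl ν) 1)
    + ∑ b : Fin m, p (Sum.inr (Sum.inr (b, ν))) *
        fderiv ℝ g (pr10 n m p) (Pi.single (Sum.inr b) 1)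

/-- First jet prolongation of a vector field `Z` on `Y`. -/
noncomputable def prolongY (n m : ℕ) (Z : YC n m → YC n m) (p : Jet1 n m) : Jet1 n m :=
  Sum.elim (fun μ => Z (pr10 n m p) (Sum.inl μ))
    (Sum.elim (fun a => Z (pr10 n m p) (Sum.inr a))
      (fun aν : Fin m × Fin (n + 1) =>
        totalDY n m aν.2 (fun y => Z y (Sum.inr aν.1)) p
          - ∑ μ : Fin (n + 1), p (Sum.inr (Sum.inr (aν.1, μ))) *
              totalDY n m aν.2 (fun y => Z y (Sum.inl μ)) p))

/-- The contact one-form `θ^a = dy^a - y^a_μ dx^μ` at `p`, evaluated on a vector. -/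
def thetaVec (n m : ℕ) (a : Fin m) (p : Jet1 n m) (v : Jet1 n m) : ℝ :=
  v (Sum.inr (Sum.inl a)) - ∑ μ : Fin (n + 1), p (Sum.inr (Sum.inr (a, μ))) * v (Sum.inl μ)

/-- The `(n+1)`-form `θ^a ∧ d^n x_μ` at `p`. -/
noncomputable def thetaWedge (n m : ℕ) (a : Fin m) (μ : Fin (n + 1)) (p : Jet1 n m)
    (vs : Fin (n + 1) → Jet1 n m) : ℝ :=
  (-1 : ℝ) ^ (μ : ℕ) *
    Matrix.det (Matrix.of fun i j =>
      (Fin.cons (thetaVec n m a p)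
        (fun k => fun v => v (Sum.inl (μ.succAbove k))) : Fin (n + 1) → Jet1 n m → ℝ) i (vs j))

/-- The volume form `η = d^{n+1}x`, evaluated on `n+1` vectors. -/
noncomputable def volForm (n m : ℕ) (vs : Fin (n + 1) → Jet1 n m) : ℝ :=
  Matrix.det (Matrix.of fun i j => vs j (Sum.inl i))

/-- The Poincaré–Cartan `(n+1)`-form
`Θ_L = (∂L/∂y^a_μ) θ^a ∧ d^n x_μ + L d^{n+1}x`. -/
noncomputable def pcForm (n m : ℕ) (L : Jet1 n m → ℝ) (p : Jet1 n m)
    (vs : Fin (n + 1) → Jet1 n m) : ℝ :=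
  (∑ a : Fin m, ∑ μ : Fin (n + 1),
      fderiv ℝ L p (Pi.single (Sum.inr (Sum.inr (a, μ))) 1) * thetaWedge n m a μ p vs)
    + L p * volForm n m vs

/-- Exterior derivative of a `k`-form (given as a function of a point and `k` constant
vectors). -/
noncomputable def dform (n m k : ℕ) (ω : Jet1 n m → (Fin k → Jet1 n m) → ℝ)
    (p : Jet1 n m) (vs : Fin (k + 1) → Jet1 n m) : ℝ :=
  ∑ i : Fin (k + 1), (-1 : ℝ) ^ (i : ℕ) *
    fderiv ℝ (fun q => ω q (fun j => vs (i.succAbove j))) p (vs i)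

/-- The Poincaré–Cartan `(n+2)`-form `Ω_L = -dΘ_L`. -/
noncomputable def pcOmega (n m : ℕ) (L : Jet1 n m → ℝ) (p : Jet1 n m)
    (vs : Fin (n + 2) → Jet1 n m) : ℝ :=
  -(dform n m (n + 1) (pcForm n m L) p vs)

/-- The component `J^{n.h.}_{ξ̄} = j¹ξ̃_Y ⌟ Θ_L` of the nonholonomic momentum map
associated with the vector field `Z = ξ̃_Y`, an `n`-form. -/
noncomputable def momentumMap (n m : ℕ) (L : Jet1 n m → ℝ) (Z : YC n m → YC n m)
    (p : Jet1 n m) (vs : Fin n → Jet1 n m) : ℝ :=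
  pcForm n m L p (Fin.cons (prolongY n m Z p) vs)

/-- Lie derivative of an `(n+1)`-form along a vector field `X` on `J¹π`. -/
noncomputable def lieForm (n m : ℕ) (X : Jet1 n m → Jet1 n m)
    (ω : Jet1 n m → (Fin (n + 1) → Jet1 n m) → ℝ) (p : Jet1 n m)
    (vs : Fin (n + 1) → Jet1 n m) : ℝ :=
  fderiv ℝ (fun q => ω q vs) p (X p)
    + ∑ k : Fin (n + 1), ω p (Function.update vs k (fderiv ℝ X p (vs k)))

/-- The Lagrangian `(n+1)`-form `L·η`. -/
noncomputable def lagForm (n m : ℕ) (L : Jet1 n m → ℝ) (p : Jet1 n m)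
    (vs : Fin (n + 1) → Jet1 n m) : ℝ :=
  L p * volForm n m vs

/-! ### Helper lemmas -/

lemma aux_alt_cons {E : Type*} [AddCommGroup E] [Module ℝ E] {n : ℕ}
    (A : E [⋀^Fin (n + 1)]→ₗ[ℝ] ℝ) (u : E) (vs : Fin (n + 1) → E) (i : Fin (n + 1)) :
    (-1 : ℝ) ^ (i : ℕ) * A (Fin.cons u (fun j => vs (i.succAbove j)))
      = A (Function.update vs i u) := by
  have h2 : Function.update vs i u = i.insertNth (α := fun _ => E) u
      (fun j => vs (i.succAbove j)) := by
    funext k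
    refine Fin.succAboveCases i ?_ (fun k => ?_) k
    · simp
    · simp [Fin.succAbove_ne]
  have h3 := A.map_insertNth i u (fun j => vs (i.succAbove j))
  rw [h2, h3]
  simp [Matrix.vecCons]

/-- Cartan's formula with the operators of this file. -/
lemma aux_cartan (n m : ℕ) (ω : Jet1 n m → (Fin (n + 1) → Jet1 n m) → ℝ)
    (A : Jet1 n m → (Jet1 n m) [⋀^Fin (n + 1)]→ₗ[ℝ] ℝ) (hA : ∀ p vs, A p vs = ω p vs)
    (hd : ∀ vs : Fin n → Jet1 n m,
      Differentiable ℝ (fun z : Jet1 n m × Jet1 n m => ω z.1 (Fin.cons z.2 vs)))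
    (X : Jet1 n m → Jet1 n m) (hX : Differentiable ℝ X) (p : Jet1 n m)
    (vs : Fin (n + 1) → Jet1 n m) :
    dform n m n (fun q ws => ω q (Fin.cons (X q) ws)) p vs
      = lieForm n m X ω p vs - dform n m (n + 1) ω p (Fin.cons (X p) vs) := by
  have key : ∀ (ws : Fin n → Jet1 n m) (v : Jet1 n m),
      fderiv ℝ (fun q => ω q (Fin.cons (X q) ws)) p v
        = fderiv ℝ (fun q => ω q (Fin.cons (X p) ws)) p v
          + ω p (Fin.cons (fderiv ℝ X p v) ws) := by
    intro ws v
    set G : Jet1 n m × Jet1 n m → ℝ := fun z => ω z.1 (Fin.cons z.2 ws) with hG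
    have hGd := (hd ws (p, X p)).hasFDerivAt
    have e1 : HasFDerivAt (fun q => ω q (Fin.cons (X q) ws)) _ p :=
      HasFDerivAt.comp (g := G) (f := fun q => (q, X q)) p hGd
        ((hasFDerivAt_id p).prodMk (hX p).hasFDerivAt)
    have e2 : HasFDerivAt (fun q => ω q (Fin.cons (X p) ws)) _ p :=
      HasFDerivAt.comp (g := G) (f := fun q => (q, X p)) p hGd
        ((hasFDerivAt_id p).prodMk (hasFDerivAt_const (X p) p))
    have e3 : HasFDerivAt (fun u => ω p (Fin.cons u ws)) _ (X p) :=
      HasFDerivAt.comp (g := G) (f := fun u => (p, u)) (X p) hGd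
        ((hasFDerivAt_const p (X p)).prodMk (hasFDerivAt_id (X p)))
    let l : Jet1 n m →ₗ[ℝ] ℝ :=
      { toFun := fun u => ω p (Fin.cons u ws)
        map_add' := fun a b => by
          simp only [← hA]
          exact (A p).toMultilinearMap.cons_add ws a b
        map_smul' := fun c a => by
          simp only [← hA]
          exact (A p).toMultilinearMap.cons_smul ws c a }
    have e4 : HasFDerivAt (fun u => ω p (Fin.cons u ws)) l.toContinuousLinearMap (X p) :=
      l.toContinuousLinearMap.hasFDerivAt
    have e5 := congrArg (fun T => T (fderiv ℝ X p v)) (e3.unique e4)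
    have e6 : ω p (Fin.cons (fderiv ℝ X p v) ws) = l.toContinuousLinearMap (fderiv ℝ X p v) := rfl
    rw [e1.fderiv, e2.fderiv, e6, ← e5]
    simp only [ContinuousLinearMap.comp_apply, ← map_add]
    congr 1
    simp
  unfold dform lieForm
  rw [Fin.sum_univ_succ (n := n + 1)]
  have a1 : ∀ i : Fin (n + 1), (fun j => (Fin.cons (X p) vs : Fin (n + 2) → Jet1 n m)
      (i.succ.succAbove j)) = Fin.cons (X p) (fun j => vs (i.succAbove j)) := by
    intro i
    funext j
    refine Fin.cases ?_ (fun j => ?_) j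
    · simp
    · simp
  simp only [a1, key, mul_add, Finset.sum_add_distrib]
  have a2 : ∀ i : Fin (n + 1), (-1 : ℝ) ^ (i : ℕ) *
      ω p (Fin.cons (fderiv ℝ X p (vs i)) (fun j => vs (i.succAbove j)))
      = ω p (Function.update vs i (fderiv ℝ X p (vs i))) := by
    intro i
    rw [← hA, ← hA, aux_alt_cons]
  simp only [a2]
  simp [pow_succ, add_comm]

/-- Determinant forms as alternating maps. -/
noncomputable def auxDetAlt {E : Type*} [AddCommGroup E] [Module ℝ E] {k : ℕ}
    (l : Fin k → E →ₗ[ℝ] ℝ) : E [⋀^Fin k]→ₗ[ℝ] ℝ :=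
  (Matrix.detRowAlternating (n := Fin k) (R := ℝ)).compLinearMap (LinearMap.pi l)

lemma auxDetAlt_apply {E : Type*} [AddCommGroup E] [Module ℝ E] {k : ℕ}
    (l : Fin k → E →ₗ[ℝ] ℝ) (vs : Fin k → E) :
    auxDetAlt l vs = Matrix.det (Matrix.of fun i j => l i (vs j)) := by
  rw [← Matrix.det_transpose]
  rfl

noncomputable def auxTheta (n m : ℕ) (a : Fin m) (p : Jet1 n m) : Jet1 n m →ₗ[ℝ] ℝ where
  toFun := thetaVec n m a p
  map_add' v w := by
    simp [thetaVec, mul_add, Finset.sum_add_distrib]; ring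
  map_smul' c v := by
    simp only [thetaVec, Pi.smul_apply, smul_eq_mul, RingHom.id_apply, mul_sub, Finset.mul_sum]
    congr 1
    exact Finset.sum_congr rfl fun _ _ => by ring

noncomputable def auxWedgeAlt (n m : ℕ) (a : Fin m) (μ : Fin (n + 1)) (p : Jet1 n m) :
    (Jet1 n m) [⋀^Fin (n + 1)]→ₗ[ℝ] ℝ :=
  ((-1 : ℝ) ^ (μ : ℕ)) • auxDetAlt (Fin.cons (auxTheta n m a p)
    (fun k => LinearMap.proj (Sum.inl (μ.succAbove k))))

lemma auxWedgeAlt_apply (n m : ℕ) (a : Fin m) (μ : Fin (n + 1)) (p : Jet1 n m)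
    (vs : Fin (n + 1) → Jet1 n m) : auxWedgeAlt n m a μ p vs = thetaWedge n m a μ p vs := by
  unfold auxWedgeAlt thetaWedge
  rw [AlternatingMap.smul_apply, auxDetAlt_apply, smul_eq_mul]
  congr 2
  ext i j
  refine Fin.cases ?_ (fun i => ?_) i
  · rfl
  · rfl

noncomputable def auxPcAlt (n m : ℕ) (L : Jet1 n m → ℝ) (p : Jet1 n m) :
    (Jet1 n m) [⋀^Fin (n + 1)]→ₗ[ℝ] ℝ :=
  (∑ a : Fin m, ∑ μ : Fin (n + 1),
      fderiv ℝ L p (Pi.single (Sum.inr (Sum.inr (a, μ))) 1) • auxWedgeAlt n m a μ p)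
    + L p • auxDetAlt (fun i => LinearMap.proj (Sum.inl i))

lemma aux_alt_sum {E ι : Type*} [AddCommGroup E] [Module ℝ E] {k : ℕ} (s : Finset ι)
    (f : ι → E [⋀^Fin k]→ₗ[ℝ] ℝ) (vs : Fin k → E) : (∑ i ∈ s, f i) vs = ∑ i ∈ s, f i vs := by
  classical
  induction s using Finset.induction_on with
  | empty => simp
  | insert i s hi ih => simp [Finset.sum_insert hi, ih]

lemma auxPcAlt_apply (n m : ℕ) (L : Jet1 n m → ℝ) (p : Jet1 n m)
    (vs : Fin (n + 1) → Jet1 n m) : auxPcAlt n m L p vs = pcForm n m L p vs := by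
  unfold auxPcAlt pcForm volForm
  simp [aux_alt_sum, auxWedgeAlt_apply, auxDetAlt_apply]

lemma aux_det_diff {E : Type*} [NormedAddCommGroup E] [NormedSpace ℝ E] {k : ℕ}
    (M : E → Matrix (Fin k) (Fin k) ℝ) (h : ∀ i j, Differentiable ℝ (fun z => M z i j)) :
    Differentiable ℝ (fun z => (M z).det) := by
  simp only [Matrix.det_apply']
  refine Differentiable.fun_sum fun σ _ => ?_
  refine Differentiable.const_mul ?_ _
  have : ∀ s : Finset (Fin k), Differentiable ℝ (fun z => ∏ i ∈ s, M z (σ i) i) := by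
    intro s
    induction s using Finset.induction_on with
    | empty => simp
    | insert i s hi ih =>
      simp only [Finset.prod_insert hi]
      exact (h _ _).mul ih
  exact this _

lemma aux_theta_diff {E : Type*} [NormedAddCommGroup E] [NormedSpace ℝ E] (n m : ℕ) (a : Fin m)
    (f g : E → Jet1 n m) (hf : Differentiable ℝ f) (hg : Differentiable ℝ g) :
    Differentiable ℝ (fun z => thetaVec n m a (f z) (g z)) := by
  unfold thetaVec
  have hf' := differentiable_pi.1 hf
  have hg' := differentiable_pi.1 hg
  refine (hg' _).sub (Differentiable.fun_sum fun μ _ => (hf' _).mul (hg' _))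

lemma aux_wedge_diff {E : Type*} [NormedAddCommGroup E] [NormedSpace ℝ E] (n m : ℕ) (a : Fin m)
    (μ : Fin (n + 1))
    (f : E → Jet1 n m) (g : E → Fin (n + 1) → Jet1 n m) (hf : Differentiable ℝ f)
    (hg : ∀ j, Differentiable ℝ (fun z => g z j)) :
    Differentiable ℝ (fun z => thetaWedge n m a μ (f z) (g z)) := by
  unfold thetaWedge
  refine Differentiable.const_mul (aux_det_diff _ fun i j => ?_) _
  refine Fin.cases ?_ (fun i => ?_) i
  · exact aux_theta_diff n m a f _ hf (hg j)
  · exact differentiable_pi.1 (hg j) _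

lemma aux_dL_diff (n m : ℕ) (L : Jet1 n m → ℝ) (hL : ContDiff ℝ (⊤ : ℕ∞) L) (v : Jet1 n m) :
    Differentiable ℝ (fun p => fderiv ℝ L p v) := by
  have h : Differentiable ℝ (fderiv ℝ L) :=
    (hL.fderiv_right (m := 1) (by norm_cast)).differentiable (by simp)
  exact h.clm_apply (differentiable_const v)

lemma aux_L_diff (n m : ℕ) (L : Jet1 n m → ℝ) (hL : ContDiff ℝ (⊤ : ℕ∞) L) :
    Differentiable ℝ L := hL.differentiable (by simp)

lemma aux_pc_diff {E : Type*} [NormedAddCommGroup E] [NormedSpace ℝ E] (n m : ℕ)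
    (L : Jet1 n m → ℝ) (hL : ContDiff ℝ (⊤ : ℕ∞) L)
    (f : E → Jet1 n m) (g : E → Fin (n + 1) → Jet1 n m) (hf : Differentiable ℝ f)
    (hg : ∀ j, Differentiable ℝ (fun z => g z j)) :
    Differentiable ℝ (fun z => pcForm n m L (f z) (g z)) := by
  unfold pcForm volForm
  refine Differentiable.add (Differentiable.fun_sum fun a _ => Differentiable.fun_sum fun μ _ =>
    ((aux_dL_diff n m L hL _).comp hf).mul (aux_wedge_diff n m a μ f g hf hg)) ?_
  refine ((aux_L_diff n m L hL).comp hf).mul (aux_det_diff _ fun i j => ?_)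
  exact differentiable_pi.1 (hg j) _

lemma aux_pr10_diff (n m : ℕ) : Differentiable ℝ (pr10 n m) := by
  refine differentiable_pi.2 fun i => ?_
  unfold pr10
  fun_prop

lemma aux_total_diff (n m : ℕ) (ν : Fin (n + 1)) (g : YC n m → ℝ)
    (hg : ContDiff ℝ (⊤ : ℕ∞) g) : Differentiable ℝ (totalDY n m ν g) := by
  have h : Differentiable ℝ (fderiv ℝ g) :=
    (hg.fderiv_right (m := 1) (by norm_cast)).differentiable (by simp)
  have h2 : ∀ v, Differentiable ℝ (fun p => fderiv ℝ g (pr10 n m p) v) := fun v =>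
    (h.comp (aux_pr10_diff n m)).clm_apply (differentiable_const v)
  unfold totalDY
  refine (h2 _).add (Differentiable.fun_sum fun b _ => ?_)
  exact Differentiable.mul (by fun_prop) (h2 _)

lemma aux_prolong_diff (n m : ℕ) (Z : YC n m → YC n m) (hZ : ContDiff ℝ (⊤ : ℕ∞) Z) :
    Differentiable ℝ (prolongY n m Z) := by
  have hc : ∀ i, ContDiff ℝ (⊤ : ℕ∞) (fun y => Z y i) := contDiff_pi.1 hZ
  have hc' : ∀ i, Differentiable ℝ (fun p => Z (pr10 n m p) i) := fun i =>
    ((hc i).differentiable (by simp)).comp (aux_pr10_diff n m)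
  refine differentiable_pi.2 fun i => ?_
  rcases i with μ | a | ⟨a, ν⟩
  · exact hc' _
  · exact hc' _
  · refine Differentiable.sub (aux_total_diff n m ν _ (hc _)) (Differentiable.fun_sum fun b _ => ?_)
    exact Differentiable.mul (by fun_prop) (aux_total_diff n m ν _ (hc _))

/-- `𝓛_X θ^a` kills contact vectors. -/
lemma aux_lie_theta (n m : ℕ) (Z : YC n m → YC n m) (hZ : ContDiff ℝ (⊤ : ℕ∞) Z) (a : Fin m)
    (p w : Jet1 n m) (hw : ∀ b, thetaVec n m b p w = 0) :
    fderiv ℝ (fun q => thetaVec n m a q w) p (prolongY n m Z p)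
      + thetaVec n m a p (fderiv ℝ (prolongY n m Z) p w) = 0 := by
  have hD : DifferentiableAt ℝ (prolongY n m Z) p := aux_prolong_diff n m Z hZ p
  have hc : ∀ i, Differentiable ℝ (fun y => Z y i) := fun i =>
    (contDiff_pi.1 hZ i).differentiable (by simp)
  have e1 : ∀ X : Jet1 n m, fderiv ℝ (fun q => thetaVec n m a q w) p X
      = - ∑ μ : Fin (n + 1), X (Sum.inr (Sum.inr (a, μ))) * w (Sum.inl μ) := by
    intro X
    let l : Jet1 n m →ₗ[ℝ] ℝ :=
      ∑ μ : Fin (n + 1), w (Sum.inl μ) • LinearMap.proj (Sum.inr (Sum.inr (a, μ)))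
    have hl : HasFDerivAt (fun q => thetaVec n m a q w) (-l.toContinuousLinearMap) p := by
      have := (l.toContinuousLinearMap.hasFDerivAt (x := p)).const_sub (w (Sum.inr (Sum.inl a)))
      refine this.congr_of_eventuallyEq (Filter.Eventually.of_forall fun q => ?_)
      simp [thetaVec, l, LinearMap.sum_apply, mul_comm]
    rw [hl.fderiv]
    simp [l, LinearMap.sum_apply, mul_comm]
  let P : Jet1 n m →ₗ[ℝ] YC n m :=
    { toFun := pr10 n m
      map_add' := fun _ _ => rfl
      map_smul' := fun _ _ => rfl }
  have hP : HasFDerivAt (pr10 n m) P.toContinuousLinearMap p :=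
    P.toContinuousLinearMap.hasFDerivAt
  have hpw : pr10 n m w = ∑ ν : Fin (n + 1), w (Sum.inl ν) •
      ((Pi.single (Sum.inl ν) 1 : YC n m)
        + ∑ b : Fin m, p (Sum.inr (Sum.inr (b, ν))) • (Pi.single (Sum.inr b) 1 : YC n m)) := by
    funext i
    rcases i with μ | b
    · simp [pr10, Finset.sum_apply, Pi.single_apply]
    · have := hw b
      unfold thetaVec at this
      simp [pr10, Finset.sum_apply, Pi.single_apply]
      rw [sub_eq_zero.1 this]
      exact Finset.sum_congr rfl fun _ _ => mul_comm _ _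
  have e2 : ∀ i, fderiv ℝ (fun q => Z (pr10 n m q) i) p w
      = ∑ ν : Fin (n + 1), w (Sum.inl ν) * totalDY n m ν (fun y => Z y i) p := by
    intro i
    have h := HasFDerivAt.comp (g := fun y => Z y i) p (hc i (pr10 n m p)).hasFDerivAt hP
    have h' : HasFDerivAt (fun q => Z (pr10 n m q) i) _ p := h
    rw [h'.fderiv, ContinuousLinearMap.comp_apply]
    have : P.toContinuousLinearMap w = pr10 n m w := rfl
    rw [this, hpw]
    simp only [map_sum, map_smul, map_add, totalDY, smul_eq_mul]
  have e3 : ∀ i, fderiv ℝ (prolongY n m Z) p w i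
      = fderiv ℝ (fun q => prolongY n m Z q i) p w := by
    intro i
    have := (hasFDerivAt_pi'.1 hD.hasFDerivAt i).fderiv
    rw [this]; rfl
  rw [e1]
  unfold thetaVec
  simp only [e3]
  have e4 : ∀ μ, (fun q => prolongY n m Z q (Sum.inl μ)) = fun q => Z (pr10 n m q) (Sum.inl μ) :=
    fun _ => rfl
  have e5 : (fun q => prolongY n m Z q (Sum.inr (Sum.inl a)))
    = fun q => Z (pr10 n m q) (Sum.inr a) := rfl
  simp only [e4, e5, e2]
  simp only [prolongY, Sum.elim_inr]
  simp only [sub_mul, Finset.sum_sub_distrib, Finset.mul_sum, Finset.sum_mul]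
  have e6 : ∑ x : Fin (n + 1), totalDY n m x (fun y => Z y (Sum.inr a)) p * w (Sum.inl x)
     = ∑ x : Fin (n + 1), w (Sum.inl x) * totalDY n m x (fun y => Z y (Sum.inr a)) p :=
    Finset.sum_congr rfl fun _ _ => mul_comm _ _
  rw [e6, Finset.sum_comm]
  have e7 : ∑ y : Fin (n + 1), ∑ x : Fin (n + 1), p (Sum.inr (Sum.inr (a, y))) *
      totalDY n m x (fun q => Z q (Sum.inl y)) p * w (Sum.inl x)
      = ∑ y : Fin (n + 1), ∑ x : Fin (n + 1), p (Sum.inr (Sum.inr (a, y))) *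
      (w (Sum.inl x) * totalDY n m x (fun q => Z q (Sum.inl y)) p) :=
    Finset.sum_congr rfl fun _ _ => Finset.sum_congr rfl fun _ _ => by ring
  rw [e7]
  ring

/-- Minors of the base directions. -/
noncomputable def auxMinor (n m : ℕ) (μ : Fin (n + 1)) (j : Fin (n + 1))
    (vs : Fin (n + 1) → Jet1 n m) : ℝ :=
  Matrix.det (Matrix.of fun (i k : Fin n) => vs (j.succAbove k) (Sum.inl (μ.succAbove i)))

lemma aux_wedge_expand (n m : ℕ) (a : Fin m) (μ : Fin (n + 1)) (p : Jet1 n m)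
    (vs : Fin (n + 1) → Jet1 n m) :
    thetaWedge n m a μ p vs = (-1 : ℝ) ^ (μ : ℕ) *
      ∑ j : Fin (n + 1), (-1 : ℝ) ^ (j : ℕ) * thetaVec n m a p (vs j) * auxMinor n m μ j vs := by
  unfold thetaWedge
  rw [Matrix.det_succ_row_zero]
  rfl

lemma aux_lie_wedge (n m : ℕ) (Z : YC n m → YC n m) (hZ : ContDiff ℝ (⊤ : ℕ∞) Z) (a : Fin m)
    (μ : Fin (n + 1)) (p : Jet1 n m) (ws : Fin (n + 1) → Jet1 n m)
    (hw : ∀ j b, thetaVec n m b p (ws j) = 0) :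
    lieForm n m (prolongY n m Z) (thetaWedge n m a μ) p ws = 0 := by
  unfold lieForm
  have hd : ∀ j, HasFDerivAt (fun q => thetaVec n m a q (ws j))
      (fderiv ℝ (fun q => thetaVec n m a q (ws j)) p) p := fun j =>
    (aux_theta_diff n m a id (fun _ => ws j) differentiable_id (differentiable_const _)
      p).hasFDerivAt
  have h1 : HasFDerivAt (fun q => thetaWedge n m a μ q ws) (((-1 : ℝ) ^ (μ : ℕ)) •
      ∑ j : Fin (n + 1), ((-1 : ℝ) ^ (j : ℕ) * auxMinor n m μ j ws) •
        fderiv ℝ (fun q => thetaVec n m a q (ws j)) p) p := by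
    have := (HasFDerivAt.fun_sum (u := Finset.univ) fun (j : Fin (n + 1)) _ =>
      (hd j).const_mul ((-1 : ℝ) ^ (j : ℕ) * auxMinor n m μ j ws)).const_mul ((-1 : ℝ) ^ (μ : ℕ))
    refine this.congr_of_eventuallyEq (Filter.Eventually.of_forall fun q => ?_)
    simp only [aux_wedge_expand]
    congr 1
    exact Finset.sum_congr rfl fun _ _ => by ring
  rw [h1.fderiv]
  have h2 : ∀ (k : Fin (n + 1)) (u : Jet1 n m), thetaWedge n m a μ p (Function.update ws k u)
      = (-1 : ℝ) ^ (μ : ℕ) * ((-1 : ℝ) ^ (k : ℕ) * auxMinor n m μ k ws * thetaVec n m a p u) := by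
    intro k u
    rw [aux_wedge_expand, Finset.sum_eq_single k]
    · have : auxMinor n m μ k (Function.update ws k u) = auxMinor n m μ k ws := by
        unfold auxMinor
        simp [Fin.succAbove_ne]
      rw [this]
      simp only [Function.update_self]
      ring
    · intro j _ hj
      rw [Function.update_of_ne hj, hw]
      ring
    · simp
  simp only [h2]
  rw [← Finset.mul_sum]
  simp only [smul_apply, sum_apply, smul_eq_mul]
  rw [← mul_add, ← Finset.sum_add_distrib]
  simp only [← mul_add, aux_lie_theta n m Z hZ a p _ (hw _)]
  simp

lemma aux_lie_pc (n m : ℕ) (L : Jet1 n m → ℝ) (hL : ContDiff ℝ (⊤ : ℕ∞) L)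
    (Z : YC n m → YC n m) (hZ : ContDiff ℝ (⊤ : ℕ∞) Z)
    (p : Jet1 n m) (ws : Fin (n + 1) → Jet1 n m)
    (hw : ∀ j b, thetaVec n m b p (ws j) = 0) :
    lieForm n m (prolongY n m Z) (pcForm n m L) p ws
      = lieForm n m (prolongY n m Z) (lagForm n m L) p ws := by
  have h0 : ∀ a μ, thetaWedge n m a μ p ws = 0 := by
    intro a μ
    rw [aux_wedge_expand]
    simp [hw]
  have hW := fun a μ => aux_lie_wedge n m Z hZ a μ p ws hw
  unfold lieForm at hW ⊢
  have hwd : ∀ a μ, HasFDerivAt (fun q => thetaWedge n m a μ q ws) _ p := fun a μ =>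
    (aux_wedge_diff n m a μ id (fun _ => ws) differentiable_id
      (fun _ => differentiable_const _) p).hasFDerivAt
  have hpd : ∀ v, HasFDerivAt (fun q => fderiv ℝ L q v) _ p := fun v =>
    (aux_dL_diff n m L hL v p).hasFDerivAt
  have hld : HasFDerivAt (fun q => lagForm n m L q ws) _ p :=
    ((aux_L_diff n m L hL p).mul_const (volForm n m ws)).hasFDerivAt
  have hsum : HasFDerivAt (fun q => pcForm n m L q ws) _ p :=
    (HasFDerivAt.fun_sum (u := Finset.univ) fun (a : Fin m) _ =>
      HasFDerivAt.fun_sum (u := Finset.univ) fun (μ : Fin (n + 1)) _ =>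
        (hpd (Pi.single (Sum.inr (Sum.inr (a, μ))) 1)).mul (hwd a μ)).add hld
  rw [hsum.fderiv, hld.fderiv]
  simp only [add_apply, sum_apply,
    smul_apply, smul_eq_mul, h0, zero_mul, add_zero, id]
  have h3 : ∀ k : Fin (n + 1), pcForm n m L p
      (Function.update ws k (fderiv ℝ (prolongY n m Z) p (ws k)))
      = (∑ a : Fin m, ∑ μ : Fin (n + 1),
      fderiv ℝ L p (Pi.single (Sum.inr (Sum.inr (a, μ))) 1) * thetaWedge n m a μ p
        (Function.update ws k (fderiv ℝ (prolongY n m Z) p (ws k))))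
      + lagForm n m L p (Function.update ws k (fderiv ℝ (prolongY n m Z) p (ws k))) :=
    fun _ => rfl
  simp only [h3, Finset.sum_add_distrib]
  rw [Finset.sum_comm (s := (Finset.univ : Finset (Fin (n + 1))))
    (t := (Finset.univ : Finset (Fin m)))]
  have h4 : ∀ a : Fin m, ∑ k : Fin (n + 1), ∑ μ : Fin (n + 1),
      fderiv ℝ L p (Pi.single (Sum.inr (Sum.inr (a, μ))) 1) * thetaWedge n m a μ p
        (Function.update ws k (fderiv ℝ (prolongY n m Z) p (ws k)))
      = - ∑ μ : Fin (n + 1), fderiv ℝ L p (Pi.single (Sum.inr (Sum.inr (a, μ))) 1) *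
        fderiv ℝ (fun q => thetaWedge n m a μ q ws) p (prolongY n m Z p) := by
    intro a
    rw [Finset.sum_comm, ← Finset.sum_neg_distrib]
    refine Finset.sum_congr rfl fun μ _ => ?_
    rw [← Finset.mul_sum, ← mul_neg]
    congr 1
    linarith [hW a μ]
  simp only [h4, Finset.sum_neg_distrib]
  ring

lemma aux_jet_contact (n m : ℕ) (φ : Base n → Fin m → ℝ) (hφ : ContDiff ℝ (⊤ : ℕ∞) φ)
    (x v : Base n) (b : Fin m) :
    thetaVec n m b (jetProlong n m φ x) (fderiv ℝ (jetProlong n m φ) x v) = 0 := by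
  have hc : ∀ a, ContDiff ℝ (⊤ : ℕ∞) (fun x => φ x a) := contDiff_pi.1 hφ
  have hD : DifferentiableAt ℝ (jetProlong n m φ) x := by
    refine differentiableAt_pi.2 fun i => ?_
    rcases i with μ | a | ⟨a, ν⟩
    · change DifferentiableAt ℝ (fun x : Base n => x μ) x
      fun_prop
    · exact (hc a).differentiable (by simp) x
    · have h : Differentiable ℝ (fderiv ℝ (fun x => φ x a)) :=
        ((hc a).fderiv_right (m := 1) (by norm_cast)).differentiable (by simp)
      exact h.clm_apply (differentiable_const (Pi.single ν 1)) x
  have e3 : ∀ i, fderiv ℝ (jetProlong n m φ) x v i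
      = fderiv ℝ (fun q => jetProlong n m φ q i) x v := by
    intro i
    have := (hasFDerivAt_pi'.1 hD.hasFDerivAt i).fderiv
    rw [this]; rfl
  unfold thetaVec
  simp only [e3]
  have e4 : ∀ μ, fderiv ℝ (fun q => jetProlong n m φ q (Sum.inl μ)) x v = v μ := by
    intro μ
    have : HasFDerivAt (fun q => jetProlong n m φ q (Sum.inl μ))
        (ContinuousLinearMap.proj (R := ℝ) (φ := fun _ : Fin (n + 1) => ℝ) μ) x :=
      hasFDerivAt_apply μ x
    rw [this.fderiv]; rfl
  have e5 : (fun q => jetProlong n m φ q (Sum.inr (Sum.inl b))) = fun q => φ q b := rfl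
  have hv : v = ∑ μ : Fin (n + 1), v μ • (Pi.single μ 1 : Base n) := by
    funext i
    simp [Finset.sum_apply, Pi.single_apply]
  simp only [e4, e5]
  conv_lhs => rw [hv]
  simp only [map_sum, map_smul, smul_eq_mul]
  rw [← hv, sub_eq_zero]
  exact Finset.sum_congr rfl fun _ _ => mul_comm _ _

/-- **Conservation law for horizontal nonholonomic symmetries.**
Let `ξ ∈ 𝔤` be a horizontal nonholonomic symmetry (a constant section of `𝔤^F`), i.e.
`j¹ξ_Y ⌟ Φ = 0` on all of `𝒞` for all `Φ ∈ F`, whose action moreover leaves the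
Lagrangian form invariant, `𝓛_{j¹ξ_Y}(L·η) = 0`.  Then for any solution `φ` of the
nonholonomic field equations (with prolongation in `𝒞`), the associated momentum
`J^{n.h.}_ξ = j¹ξ_Y ⌟ Θ_L` is conserved: `(j¹φ)*(d J^{n.h.}_ξ) = 0`. -/
theorem horizontal_symmetry_conservation_law (n m d : ℕ)
    (L : Jet1 n m → ℝ) (hL : ContDiff ℝ (⊤ : ℕ∞) L)
    (act : (Fin d → ℝ) → YC n m → YC n m)
    (ξ : Fin d → ℝ)
    (ξY : YC n m → YC n m) (hξ : ∀ y, ξY y = act ξ y)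
    (hs : ContDiff ℝ (⊤ : ℕ∞) ξY)
    (C : Set (Jet1 n m))
    (F : Set (Jet1 n m → (Fin (n + 1) → Jet1 n m) → ℝ))
    (hsym : ∀ (γ : Jet1 n m), γ ∈ C → ∀ Φ ∈ F, ∀ vs : Fin n → Jet1 n m,
      Φ γ (Fin.cons (prolongY n m ξY γ) vs) = 0)
    (hinv : ∀ (p : Jet1 n m) (vs : Fin (n + 1) → Jet1 n m),
      lieForm n m (prolongY n m ξY) (lagForm n m L) p vs = 0)
    (φ : Base n → Fin m → ℝ) (hφ : ContDiff ℝ (⊤ : ℕ∞) φ)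
    (hC : ∀ x, jetProlong n m φ x ∈ C)
    (hsol : ∀ W : Jet1 n m → Jet1 n m,
      (∀ Φ ∈ F, ∀ (x : Base n) (vs : Fin n → Base n),
        Φ (jetProlong n m φ x)
          (Fin.cons (W (jetProlong n m φ x))
            (fun k => fderiv ℝ (jetProlong n m φ) x (vs k))) = 0) →
      ∀ (x : Base n) (vs : Fin (n + 1) → Base n),
        pcOmega n m L (jetProlong n m φ x)
          (Fin.cons (W (jetProlong n m φ x))
            (fun k => fderiv ℝ (jetProlong n m φ) x (vs k))) = 0) :
    ∀ (x : Base n) (vs : Fin (n + 1) → Base n),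
      dform n m n (momentumMap n m L ξY) (jetProlong n m φ x)
          (fun k => fderiv ℝ (jetProlong n m φ) x (vs k)) = 0 := by
  intro x vs
  have hc := aux_cartan n m (pcForm n m L) (auxPcAlt n m L) (auxPcAlt_apply n m L)
    (fun ws => aux_pc_diff n m L hL _ _ differentiable_fst (fun j => by
      refine Fin.cases ?_ (fun j => ?_) j
      · exact differentiable_snd
      · exact differentiable_const _))
    (prolongY n m ξY) (aux_prolong_diff n m ξY hs) (jetProlong n m φ x)
    (fun k => fderiv ℝ (jetProlong n m φ) x (vs k))
  have h1 := hsol (prolongY n m ξY) (fun Φ hΦ x vs => hsym _ (hC x) Φ hΦ _) x vs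
  unfold pcOmega at h1
  have h2 := aux_lie_pc n m L hL ξY hs (jetProlong n m φ x)
    (fun k => fderiv ℝ (jetProlong n m φ) x (vs k))
    (fun j b => aux_jet_contact n m φ hφ x (vs j) b)
  rw [hinv] at h2
  rw [h2, neg_eq_zero.1 h1, sub_zero] at hc
  exact hc
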